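/- Let l ≥ 1 be an integer, ρ₀ > 0, and let η ∈ C_c^∞(ℝ^l) be supported in the annulus {λ ∈ ℝ^l : 1/2 ≤ ‖λ‖ ≤ 2}. For every multi-index α there exists a constant c = c(η, α, l, ρ₀) > 0 such that for all integers k ≥ 0 and all γ ∈ ℝ, ‖ ∂^α [ λ ↦ η(λ) (4^k ‖λ‖² + ρ₀²)^{iγ} ] ‖_{L²(ℝ^l)} ≤ c (1 + |γ|)^{|α|}. -/

import Mathlib

open Real MeasureTheory

/-- Iterated partial derivative of a function on ℝ^l along a list of coordinate directions. -/
noncomputable def mderiv {l : ℕ} : List (Fin l) → (EuclideanSpace ℝ (Fin l) → ℂ) →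
    EuclideanSpace ℝ (Fin l) → ℂ
  | [], f => f
  | i :: L, f => fun x => fderiv ℝ (mderiv L f) x (EuclideanSpace.single i 1)

/-- The partial derivative ∂^α of a function on ℝ^l associated with the multi-index
α : Fin l → ℕ (α i derivatives in the i-th coordinate direction). -/
noncomputable def partialD {l : ℕ} (α : Fin l → ℕ) (f : EuclideanSpace ℝ (Fin l) → ℂ) :
    EuclideanSpace ℝ (Fin l) → ℂ :=
  mderiv ((List.finRange l).flatMap fun i => List.replicate (α i) i) f

/-- Scaled amplitude: `z = (x, r, s, u)`. -/
noncomputable def ampQ {l : ℕ} (Φ : EuclideanSpace ℝ (Fin l) × (ℝ × ℝ × ℝ) → ℂ)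
    (η : EuclideanSpace ℝ (Fin l) → ℂ) : List (Fin l) →
    EuclideanSpace ℝ (Fin l) × (ℝ × ℝ × ℝ) → ℂ
  | [] => fun z => η z.1
  | i :: L => fun z => (z.2.2.1 : ℂ) * fderiv ℝ (ampQ Φ η L) z (EuclideanSpace.single i 1, 0)
      + Complex.I * (z.2.2.2 : ℂ) * fderiv ℝ Φ z (EuclideanSpace.single i 1, 0) * ampQ Φ η L z

lemma ampQ_contDiff {l : ℕ} (Φ : EuclideanSpace ℝ (Fin l) × (ℝ × ℝ × ℝ) → ℂ)
    (η : EuclideanSpace ℝ (Fin l) → ℂ) (hΦ : ContDiff ℝ (⊤ : ℕ∞) Φ)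
    (hη : ContDiff ℝ (⊤ : ℕ∞) η) (L : List (Fin l)) : ContDiff ℝ (⊤ : ℕ∞) (ampQ Φ η L) := by
  induction L with
  | nil => exact hη.comp contDiff_fst
  | cons i L ih =>
    have h1 : ContDiff ℝ (⊤ : ℕ∞) (fun z => fderiv ℝ (ampQ Φ η L) z
        ((EuclideanSpace.single i 1, 0) : EuclideanSpace ℝ (Fin l) × (ℝ × ℝ × ℝ))) :=
      (ih.fderiv_right (m := (⊤ : ℕ∞)) (by simp)).clm_apply contDiff_const
    have h2 : ContDiff ℝ (⊤ : ℕ∞) (fun z => fderiv ℝ Φ z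
        ((EuclideanSpace.single i 1, 0) : EuclideanSpace ℝ (Fin l) × (ℝ × ℝ × ℝ))) :=
      (hΦ.fderiv_right (m := (⊤ : ℕ∞)) (by simp)).clm_apply contDiff_const
    have h3 : ContDiff ℝ (⊤ : ℕ∞)
        (fun z : EuclideanSpace ℝ (Fin l) × (ℝ × ℝ × ℝ) => (z.2.2.1 : ℂ)) :=
      Complex.ofRealCLM.contDiff.comp (contDiff_fst.comp (contDiff_snd.comp contDiff_snd))
    have h4 : ContDiff ℝ (⊤ : ℕ∞)
        (fun z : EuclideanSpace ℝ (Fin l) × (ℝ × ℝ × ℝ) => (z.2.2.2 : ℂ)) :=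
      Complex.ofRealCLM.contDiff.comp (contDiff_snd.comp (contDiff_snd.comp contDiff_snd))
    exact (h3.mul h1).add (((contDiff_const.mul h4).mul h2).mul ih)

lemma ampQ_zero {l : ℕ} (Φ : EuclideanSpace ℝ (Fin l) × (ℝ × ℝ × ℝ) → ℂ)
    (η : EuclideanSpace ℝ (Fin l) → ℂ) (h : ∀ x, 2 < ‖x‖ → η x = 0) (L : List (Fin l)) :
    ∀ z, 2 < ‖z.1‖ → ampQ Φ η L z = 0 := by
  induction L with
  | nil => exact fun z hz => h _ hz
  | cons i L ih =>
    intro z hz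
    have hev : ampQ Φ η L =ᶠ[nhds z] fun _ => (0 : ℂ) := by
      have : IsOpen {z : EuclideanSpace ℝ (Fin l) × (ℝ × ℝ × ℝ) | 2 < ‖z.1‖} :=
        isOpen_lt continuous_const (continuous_norm.comp continuous_fst)
      filter_upwards [this.mem_nhds hz] with w hw using ih w hw
    simp [ampQ, hev.fderiv_eq, ih z hz]

lemma mderiv_ampQ {l : ℕ} (Φ : EuclideanSpace ℝ (Fin l) × (ℝ × ℝ × ℝ) → ℂ)
    (η : EuclideanSpace ℝ (Fin l) → ℂ) (hΦ : ContDiff ℝ (⊤ : ℕ∞) Φ)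
    (hη : ContDiff ℝ (⊤ : ℕ∞) η) (κ : ℂ) (r γ : ℝ) (L : List (Fin l)) :
    mderiv L (fun x => κ * (Complex.exp (Complex.I * γ *
        Φ (x, r, (1 + |γ|)⁻¹, γ * (1 + |γ|)⁻¹)) * η x)) =
      fun x => κ * ((1 + |γ|) ^ L.length : ℝ) * (Complex.exp (Complex.I * γ *
        Φ (x, r, (1 + |γ|)⁻¹, γ * (1 + |γ|)⁻¹)) *
        ampQ Φ η L (x, r, (1 + |γ|)⁻¹, γ * (1 + |γ|)⁻¹)) := by
  induction L with
  | nil => funext x; simp [mderiv, ampQ]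
  | cons i L ih =>
    funext x
    simp only [mderiv, ih]
    set p : ℝ × ℝ × ℝ := (r, (1 + |γ|)⁻¹, γ * (1 + |γ|)⁻¹) with hp
    have hM : (1 + |γ|) ≠ 0 := by positivity
    have hin : HasFDerivAt (fun x : EuclideanSpace ℝ (Fin l) => (x, p))
        (ContinuousLinearMap.inl ℝ _ _) x := hasFDerivAt_prodMk_left x p
    have hQ : HasFDerivAt (fun x => ampQ Φ η L (x, p)) _ x :=
      (((ampQ_contDiff Φ η hΦ hη L).differentiable (by simp)) (x, p)).hasFDerivAt.comp x hin
    have hP : HasFDerivAt (fun x => Φ (x, p)) _ x :=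
      ((hΦ.differentiable (by simp)) (x, p)).hasFDerivAt.comp x hin
    have hE := ((hP.const_mul (Complex.I * γ)).cexp.mul hQ).const_mul
      (κ * ((1 + |γ|) ^ L.length : ℝ))
    refine (congrArg (fun T => T (EuclideanSpace.single i 1)) hE.fderiv).trans ?_
    have h1 : (((1 + |γ|) ^ (L.length + 1) : ℝ) : ℂ) * (((1 + |γ|)⁻¹ : ℝ) : ℂ)
        = ((1 + |γ|) ^ L.length : ℝ) := by
      rw [← Complex.ofReal_mul]; congr 1; field_simp; ring
    have h2 : (((1 + |γ|) ^ (L.length + 1) : ℝ) : ℂ) * ((γ * (1 + |γ|)⁻¹ : ℝ) : ℂ)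
        = ((1 + |γ|) ^ L.length : ℝ) * γ := by
      rw [← Complex.ofReal_mul, ← Complex.ofReal_mul]; congr 1; field_simp; ring
    simp only [ampQ, List.length_cons, ContinuousLinearMap.add_apply,
      ContinuousLinearMap.smul_apply, ContinuousLinearMap.comp_apply,
      ContinuousLinearMap.inl_apply, smul_eq_mul]
    generalize fderiv ℝ (ampQ Φ η L) (x, p) (EuclideanSpace.single i 1, 0) = A
    generalize fderiv ℝ Φ (x, p) (EuclideanSpace.single i 1, 0) = B
    have e1 : p.2.1 = (1 + |γ|)⁻¹ := rfl
    have e2 : p.2.2 = γ * (1 + |γ|)⁻¹ := rfl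
    simp only [e1, e2]
    generalize ampQ Φ η L (x, p) = C
    generalize Complex.exp (Complex.I * γ * Φ (x, p)) = X
    linear_combination (-κ * X * A) * h1 - κ * X * Complex.I * B * C * h2

lemma exists_phase {l : ℕ} (ρ₀ : ℝ) :
    ∃ Φ : EuclideanSpace ℝ (Fin l) × (ℝ × ℝ × ℝ) → ℝ, ContDiff ℝ (⊤ : ℕ∞) Φ ∧
      ∀ x p, 1 / 2 ≤ ‖x‖ → Φ (x, p) = Real.log (‖x‖ ^ 2 + p.1 ^ 2 * ρ₀ ^ 2) := by
  let b : ContDiffBump (0 : EuclideanSpace ℝ (Fin l)) := ⟨1 / 8, 1 / 4, by norm_num, by norm_num⟩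
  refine ⟨fun z => Real.log ((‖z.1‖ ^ 2 + b z.1) + z.2.1 ^ 2 * ρ₀ ^ 2), ?_, ?_⟩
  · apply ContDiff.log
    · have h1 : ContDiff ℝ (⊤ : ℕ∞)
          (fun z : EuclideanSpace ℝ (Fin l) × (ℝ × ℝ × ℝ) => ‖z.1‖ ^ 2) :=
        (contDiff_norm_sq ℝ).comp contDiff_fst
      have h2 : ContDiff ℝ (⊤ : ℕ∞)
          (fun z : EuclideanSpace ℝ (Fin l) × (ℝ × ℝ × ℝ) => b z.1) :=
        b.contDiff.comp contDiff_fst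
      have h3 : ContDiff ℝ (⊤ : ℕ∞)
          (fun z : EuclideanSpace ℝ (Fin l) × (ℝ × ℝ × ℝ) => z.2.1) :=
        contDiff_fst.comp contDiff_snd
      exact (h1.add h2).add ((h3.pow 2).mul contDiff_const)
    · intro z
      have hb : 0 ≤ b z.1 := b.nonneg
      have : 0 < ‖z.1‖ ^ 2 + b z.1 := by
        by_cases h : z.1 = 0
        · have : b z.1 = 1 := b.one_of_mem_closedBall (by simp [h, b])
          rw [this]; positivity
        · have : 0 < ‖z.1‖ := norm_pos_iff.2 h
          positivity
      positivity
  · intro x p hx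
    have : b x = 0 := b.zero_of_le_dist (by simp [b]; linarith)
    simp [this]

/-- For η ∈ C_c^∞(ℝ^l) supported in {1/2 ≤ ‖λ‖ ≤ 2} and every multi-index α there is
c > 0 such that for all k ∈ ℕ and γ ∈ ℝ,
‖∂^α[λ ↦ η(λ)(4^k‖λ‖² + ρ₀²)^{iγ}]‖_{L²(ℝ^l)} ≤ c (1 + |γ|)^{|α|}. -/
theorem multiplier_piece_L2_bound (l : ℕ) (hl : 1 ≤ l) (ρ₀ : ℝ) (hρ : 0 < ρ₀)
    (η : EuclideanSpace ℝ (Fin l) → ℂ) (hη : ContDiff ℝ (⊤ : ℕ∞) η)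
    (hsupp : Function.support η ⊆ {lam : EuclideanSpace ℝ (Fin l) |
      1 / 2 ≤ ‖lam‖ ∧ ‖lam‖ ≤ 2}) :
    ∀ α : Fin l → ℕ, ∃ c : ℝ, 0 < c ∧ ∀ (k : ℕ) (γ : ℝ),
      Real.sqrt (∫ lam : EuclideanSpace ℝ (Fin l),
          ‖partialD α (fun lam' => η lam' *
              ((4 ^ k * ‖lam'‖ ^ 2 + ρ₀ ^ 2 : ℝ) : ℂ) ^ (Complex.I * γ)) lam‖ ^ 2) ≤
        c * (1 + |γ|) ^ (∑ i, α i) := by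
  intro α
  obtain ⟨Φ, hΦ, hΦe⟩ := exists_phase (l := l) ρ₀
  set L := (List.finRange l).flatMap fun i => List.replicate (α i) i with hL
  have hlen : L.length = ∑ i, α i := by
    simp [hL, List.length_flatMap, List.sum_ofFn, ← List.ofFn_eq_map]
  have hη0 : ∀ x, 2 < ‖x‖ → η x = 0 := by
    intro x hx
    by_contra h
    exact absurd (hsupp h).2 (not_le.2 hx)
  let Φc : EuclideanSpace ℝ (Fin l) × (ℝ × ℝ × ℝ) → ℂ := fun z => (Φ z : ℂ)
  have hΦc : ContDiff ℝ (⊤ : ℕ∞) Φc := Complex.ofRealCLM.contDiff.comp hΦ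
  have hK : IsCompact ((Metric.closedBall (0 : EuclideanSpace ℝ (Fin l)) 2) ×ˢ
      ((Set.Icc (-1 : ℝ) 1) ×ˢ ((Set.Icc (-1 : ℝ) 1) ×ˢ (Set.Icc (-1 : ℝ) 1)))) :=
    (isCompact_closedBall _ _).prod (isCompact_Icc.prod (isCompact_Icc.prod isCompact_Icc))
  obtain ⟨C, hC⟩ := hK.exists_bound_of_continuousOn
    (ampQ_contDiff Φc η hΦc hη L).continuous.continuousOn
  set V : ℝ := (volume (Metric.closedBall (0 : EuclideanSpace ℝ (Fin l)) 2)).toReal with hV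
  refine ⟨|C| * Real.sqrt V + 1, by positivity, fun k γ => ?_⟩
  have hM : 1 ≤ 1 + |γ| := by linarith [abs_nonneg γ]
  have hM0 : 0 < 1 + |γ| := by linarith
  set κ : ℂ := Complex.exp (Complex.I * γ * (Real.log (4 ^ k) : ℝ)) with hκ
  have hfun : (fun lam' => η lam' *
      ((4 ^ k * ‖lam'‖ ^ 2 + ρ₀ ^ 2 : ℝ) : ℂ) ^ (Complex.I * γ)) =
      (fun x => κ * (Complex.exp (Complex.I * γ *
        Φc (x, (1 / 2) ^ k, (1 + |γ|)⁻¹, γ * (1 + |γ|)⁻¹)) * η x)) := by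
    funext x
    by_cases hx : η x = 0
    · simp [hx]
    · have hx2 := (hsupp hx).1
      have hxp : 0 < ‖x‖ := by linarith
      have hpos : 0 < 4 ^ k * ‖x‖ ^ 2 + ρ₀ ^ 2 := by positivity
      have hlog : Real.log (4 ^ k * ‖x‖ ^ 2 + ρ₀ ^ 2) = Real.log (4 ^ k) +
          Φ (x, (1 / 2) ^ k, (1 + |γ|)⁻¹, γ * (1 + |γ|)⁻¹) := by
        rw [hΦe _ _ hx2, ← Real.log_mul (by positivity) (by positivity)]
        congr 1
        have : (4 : ℝ) ^ k * (((1 / 2) ^ k) ^ 2) = 1 := by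
          rw [← pow_mul, mul_comm k 2, pow_mul, ← mul_pow]; norm_num
        simp only
        linear_combination (-ρ₀ ^ 2) * this
      rw [Complex.cpow_def_of_ne_zero (by exact_mod_cast hpos.ne'), ← Complex.ofReal_log hpos.le,
        hlog, hκ, ← mul_assoc (Complex.exp _), ← Complex.exp_add, mul_comm]
      congr 2
      simp only [Φc]
      push_cast
      ring
  have hmain := mderiv_ampQ Φc η hΦc hη κ ((1 / 2) ^ k) γ L
  have hκn : ‖κ‖ = 1 := by
    rw [hκ, Complex.norm_exp]
    generalize Real.log (4 ^ k) = a
    simp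
  have hpt : ∀ x, ‖partialD α (fun lam' => η lam' *
      ((4 ^ k * ‖lam'‖ ^ 2 + ρ₀ ^ 2 : ℝ) : ℂ) ^ (Complex.I * γ)) x‖ =
      (1 + |γ|) ^ (∑ i, α i) *
        ‖ampQ Φc η L (x, (1 / 2) ^ k, (1 + |γ|)⁻¹, γ * (1 + |γ|)⁻¹)‖ := by
    intro x
    rw [hfun, partialD, ← hL, hmain]
    have : ‖Complex.exp (Complex.I * γ *
        Φc (x, (1 / 2) ^ k, (1 + |γ|)⁻¹, γ * (1 + |γ|)⁻¹))‖ = 1 := by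
      rw [Complex.norm_exp]; simp [Φc]
    rw [norm_mul, norm_mul, norm_mul, this, hκn, Complex.norm_real, hlen, Real.norm_eq_abs,
      abs_of_nonneg (by positivity)]
    ring
  set N := ∑ i, α i
  have hbd : ∀ x, ‖x‖ ≤ 2 →
      ‖ampQ Φc η L (x, (1 / 2) ^ k, (1 + |γ|)⁻¹, γ * (1 + |γ|)⁻¹)‖ ≤ |C| := by
    intro x hx
    refine (hC _ ?_).trans (le_abs_self C)
    have hu : |γ * (1 + |γ|)⁻¹| ≤ 1 := by
      rw [abs_mul, abs_inv, abs_of_pos hM0, ← div_eq_mul_inv, div_le_one hM0]; linarith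
    have hs : (1 + |γ|)⁻¹ ≤ 1 := inv_le_one_of_one_le₀ hM
    have hs0 : 0 < (1 + |γ|)⁻¹ := by positivity
    have hr : ((1 / 2 : ℝ)) ^ k ≤ 1 := pow_le_one₀ (by norm_num) (by norm_num)
    have hr0 : 0 < ((1 / 2 : ℝ)) ^ k := by positivity
    refine ⟨by simpa using hx, ⟨by linarith, hr⟩, ⟨by linarith, hs⟩, abs_le.1 hu⟩
  have hint : (∫ lam : EuclideanSpace ℝ (Fin l),
          ‖partialD α (fun lam' => η lam' *
              ((4 ^ k * ‖lam'‖ ^ 2 + ρ₀ ^ 2 : ℝ) : ℂ) ^ (Complex.I * γ)) lam‖ ^ 2) ≤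
      ((1 + |γ|) ^ N * |C|) ^ 2 * V := by
    simp only [hpt]
    rw [← setIntegral_eq_integral_of_forall_compl_eq_zero
      (s := Metric.closedBall (0 : EuclideanSpace ℝ (Fin l)) 2)]
    · refine (le_abs_self _).trans ?_
      rw [← Real.norm_eq_abs]
      refine norm_setIntegral_le_of_norm_le_const measure_closedBall_lt_top ?_
      intro x hx
      rw [Real.norm_eq_abs, abs_of_nonneg (by positivity)]
      have := hbd x (by simpa using hx)
      gcongr
    · intro x hx
      rw [ampQ_zero Φc η hη0 L _ (by simpa using hx)]
      simp
  calc _ ≤ Real.sqrt (((1 + |γ|) ^ N * |C|) ^ 2 * V) := Real.sqrt_le_sqrt hint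
    _ = (1 + |γ|) ^ N * |C| * Real.sqrt V := by
      rw [Real.sqrt_mul (by positivity), Real.sqrt_sq (by positivity)]
    _ ≤ (|C| * Real.sqrt V + 1) * (1 + |γ|) ^ N := by
      have : 0 ≤ (1 + |γ|) ^ N := by positivity
      linarith
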